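/- Let T : ℤ → Σ be a one-dimensional tiling (bi-infinite word) over the alphabet Σ, and let L(T) be its language, i.e. the set of all words (T(k+1),…,T(k+m)) with k ∈ ℤ and m ≥ 1. Then the universal group U(L(T)) of the connected tiling semigroup of T is isomorphic to the free group on the set of consecutive pairs {(a,b) ∈ Σ × Σ : there exists i ∈ ℤ with T(i) = a and T(i+1) = b}. -/

import Mathlib

/-- A factorial language: a set of nonempty words closed under taking nonempty contiguous
factors. -/
def IsFactorial {α : Type*} (L : Set (List α)) : Prop :=
  (∀ w ∈ L, w ≠ []) ∧ ∀ u v w : List α, u ++ v ++ w ∈ L → v ≠ [] → v ∈ L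

/-- The relators `(u)·(v)·((u∘v))⁻¹` over all `u, v ∈ L` for which `u∘v` is defined, i.e.
the last letter of `u` equals the first letter of `v` and `u ++ tail v ∈ L`; then
`u∘v = u ++ tail v`. -/
def langRelators {α : Type*} (L : Set (List α)) : Set (FreeGroup ↥L) :=
  {r | ∃ u v uv : ↥L,
    (u : List α).getLast? = (v : List α).head? ∧
    (uv : List α) = (u : List α) ++ (v : List α).tail ∧
    r = FreeGroup.of u * FreeGroup.of v * (FreeGroup.of uv)⁻¹}

/-- The universal group `U(L)` of a language `L` (the universal group of the connected
tiling semigroup `S(L)`). -/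
abbrev LangGroup {α : Type*} (L : Set (List α)) : Type _ :=
  FreeGroup ↥L ⧸ Subgroup.normalClosure (langRelators L)

/-- The language `L(T)` of a bi-infinite word `T : ℤ → α`: all nonempty words
`(T(k+1),…,T(k+m))` occurring in `T`. -/
def langOf {α : Type*} (T : ℤ → α) : Set (List α) :=
  {w | w ≠ [] ∧ ∃ k : ℤ, ∀ (j : ℕ) (h : j < w.length), w.get ⟨j, h⟩ = T (k + 1 + j)}

open Classical in
noncomputable def pairVal {α : Type*} (P : Set (α × α)) (p : α × α) : FreeGroup ↥P :=
  if h : p ∈ P then FreeGroup.of ⟨p, h⟩ else 1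

noncomputable def wordVal {α : Type*} (P : Set (α × α)) : List α → FreeGroup ↥P
  | [] => 1
  | [_] => 1
  | a :: b :: l => pairVal P (a, b) * wordVal P (b :: l)

theorem wordVal_append {α : Type*} (P : Set (α × α)) (c : α) (l : List α) :
    ∀ u : List α, u.getLast? = some c → wordVal P (u ++ l) = wordVal P u * wordVal P (c :: l)
  | [], h => by simp at h
  | [a], h => by
    simp at h
    subst h
    simp [wordVal]
  | a :: b :: u, h => by
    have := wordVal_append P c l (b :: u) (by simpa [List.getLast?_cons_cons] using h)
    simp only [List.cons_append, wordVal] at this ⊢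
    rw [this, mul_assoc]

theorem langOf_cons {α : Type*} {T : ℤ → α} {a b : α} {l : List α}
    (h : a :: b :: l ∈ langOf T) :
    b :: l ∈ langOf T ∧ ∃ i : ℤ, T i = a ∧ T (i + 1) = b := by
  obtain ⟨-, k, hk⟩ := h
  refine ⟨⟨by simp, k + 1, fun j hj => ?_⟩, k + 1, ?_, ?_⟩
  · have := hk (j + 1) (by simpa using hj)
    simp only [List.get_eq_getElem, List.getElem_cons_succ] at this ⊢
    rw [this]; congr 1; push_cast; ring
  · simpa using (hk 0 (by simp)).symm
  · simpa using (hk 1 (by simp)).symm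

theorem pair_mem_langOf {α : Type*} {T : ℤ → α} {a b : α}
    (h : ∃ i : ℤ, T i = a ∧ T (i + 1) = b) : [a, b] ∈ langOf T := by
  obtain ⟨i, rfl, rfl⟩ := h
  refine ⟨by simp, i - 1, fun j hj => ?_⟩
  have : j = 0 ∨ j = 1 := by simp at hj; omega
  rcases this with rfl | rfl <;> simp

theorem langGroup_rel {α : Type*} {L : Set (List α)} (u v uv : ↥L)
    (h : (u : List α).getLast? = (v : List α).head?)
    (h' : (uv : List α) = (u : List α) ++ (v : List α).tail) :
    (QuotientGroup.mk (FreeGroup.of u) : LangGroup L) * QuotientGroup.mk (FreeGroup.of v)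
      = QuotientGroup.mk (FreeGroup.of uv) := by
  rw [← mul_inv_eq_one]
  exact (QuotientGroup.eq_one_iff _).2 (Subgroup.subset_normalClosure ⟨u, v, uv, h, h', rfl⟩)

theorem langGroup_back {α : Type*} (T : ℤ → α)
    (ψ : FreeGroup ↥{p : α × α | ∃ i : ℤ, T i = p.1 ∧ T (i + 1) = p.2} →* LangGroup (langOf T))
    (hψ : ∀ p, ψ (FreeGroup.of p) =
      QuotientGroup.mk (FreeGroup.of ⟨[p.1.1, p.1.2], pair_mem_langOf p.2⟩)) :
    ∀ (w : List α) (hw : w ∈ langOf T), ψ (wordVal _ w) =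
      (QuotientGroup.mk (FreeGroup.of (⟨w, hw⟩ : ↥(langOf T))) : LangGroup (langOf T))
  | [], hw => absurd rfl hw.1
  | [a], hw => by
    have := langGroup_rel ⟨[a], hw⟩ ⟨[a], hw⟩ ⟨[a], hw⟩ rfl rfl
    rw [wordVal, map_one]
    exact (mul_eq_left.1 this).symm
  | a :: b :: l, hw => by
    obtain ⟨h1, h2⟩ := langOf_cons hw
    replace h2 : (a, b) ∈ {p : α × α | ∃ i : ℤ, T i = p.1 ∧ T (i + 1) = p.2} := h2
    have ih := langGroup_back T ψ hψ (b :: l) h1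
    rw [wordVal, map_mul, ih, pairVal, dif_pos h2, hψ]
    exact langGroup_rel _ _ _ rfl rfl

theorem langGroup_tiling_iso_free {α : Type*} (T : ℤ → α) :
    Nonempty (LangGroup (langOf T) ≃*
      FreeGroup ↥{p : α × α | ∃ i : ℤ, T i = p.1 ∧ T (i + 1) = p.2}) := by
  let P : Set (α × α) := {p : α × α | ∃ i : ℤ, T i = p.1 ∧ T (i + 1) = p.2}
  let φ₀ : FreeGroup ↥(langOf T) →* FreeGroup ↥P := FreeGroup.lift fun w => wordVal P w.1
  have hφ₀ : Subgroup.normalClosure (langRelators (langOf T)) ≤ φ₀.ker := by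
    refine Subgroup.normalClosure_le_normal ?_
    rintro r ⟨u, ⟨v, hv⟩, uv, h, h', rfl⟩
    cases v with
    | nil => exact absurd rfl hv.1
    | cons c l =>
      simp only [List.head?_cons, List.tail_cons] at h h'
      have := wordVal_append P c l u.1 h
      simp [φ₀, MonoidHom.mem_ker, h', this]
  let φ : LangGroup (langOf T) →* FreeGroup ↥P := QuotientGroup.lift _ φ₀ hφ₀
  have hφ : ∀ x : FreeGroup ↥(langOf T), φ (QuotientGroup.mk x) = φ₀ x := fun x => rfl
  let ψ : FreeGroup ↥P →* LangGroup (langOf T) := FreeGroup.lift fun p =>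
    QuotientGroup.mk (FreeGroup.of ⟨[p.1.1, p.1.2], pair_mem_langOf p.2⟩)
  have hψ := langGroup_back T ψ (fun p => FreeGroup.lift_apply_of ..)
  refine ⟨MonoidHom.toMulEquiv φ ψ ?_ ?_⟩
  · refine QuotientGroup.monoidHom_ext _ (FreeGroup.ext_hom _ _ fun w => ?_)
    have : φ (QuotientGroup.mk (FreeGroup.of w)) = wordVal P w.1 := by
      rw [hφ]
      simp [φ₀]
    change ψ (φ (QuotientGroup.mk (FreeGroup.of w))) = QuotientGroup.mk (FreeGroup.of w)
    rw [this]
    exact hψ w.1 w.2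
  · refine FreeGroup.ext_hom _ _ fun p => ?_
    have h1 : ψ (FreeGroup.of p) = QuotientGroup.mk
        (FreeGroup.of ⟨[p.1.1, p.1.2], pair_mem_langOf p.2⟩) := FreeGroup.lift_apply_of ..
    change φ (ψ (FreeGroup.of p)) = FreeGroup.of p
    rw [h1]
    rw [hφ]
    have : p.1 ∈ P := p.2
    simp [φ₀, wordVal, pairVal, this]
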